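/- Let f ∈ ℂ[x,y,z,w] be a reduced homogeneous polynomial of degree d defining a free surface D: f = 0 in P³ with exponents d1 ≤ d2 ≤ d3, and assume D is not a cone (i.e., the minimal degree of a nonzero Jacobian syzygy is positive). Then d1 + d2 + d3 = d − 1, and for all sufficiently large k one has m(f)_k = a·k + b, where a = s1² − s2 and b = 2a − s1³ + (3/2)·s1·s2 − (1/2)·s3, with s1 = d1 + d2 + d3, s2 = d1d2 + d1d3 + d2d3, and s3 = d1d2d3. -/

import Mathlib

open MvPolynomial Matrix

noncomputable section

/-- The polynomial ring `S = ℂ[x,y,z,w]`. -/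
abbrev S4 : Type := MvPolynomial (Fin 4) ℂ

/-- The `S`-linear map sending `ρ = (α,β,γ,δ)` to `α fₓ + β f_y + γ f_z + δ f_w`. -/
def jacPair (f : S4) : (Fin 4 → S4) →ₗ[S4] S4 where
  toFun ρ := ∑ i, ρ i * pderiv i f
  map_add' a b := by simp [add_mul, Finset.sum_add_distrib]
  map_smul' c a := by simp [Finset.mul_sum, mul_assoc]

/-- `AR(f)`: the `S`-module of all Jacobian syzygies of `f`. -/
def AR4 (f : S4) : Submodule S4 (Fin 4 → S4) := LinearMap.ker (jacPair f)

/-- A vector of polynomials is homogeneous of degree `q` if each component is. -/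
def VecHomog (ρ : Fin 4 → S4) (q : ℕ) : Prop := ∀ i, (ρ i).IsHomogeneous q

/-- `AR(f)_k`, the degree-`k` homogeneous part of `AR(f)`, as a `ℂ`-subspace. -/
def ARgr (f : S4) (k : ℕ) : Submodule ℂ (Fin 4 → S4) :=
  (AR4 f).restrictScalars ℂ ⊓ Submodule.pi Set.univ (fun _ => homogeneousSubmodule (Fin 4) ℂ k)

/-- `ar(f)_k = dim_ℂ AR(f)_k`. -/
def arDim (f : S4) (k : ℕ) : ℕ := Module.finrank ℂ (ARgr f k)

/-- `ar(f)_q` for an integer index, with the convention that it vanishes for `q < 0`. -/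
def arZ (f : S4) (q : ℤ) : ℕ := if 0 ≤ q then arDim f q.toNat else 0

/-- The Jacobian ideal of `f`. -/
def JacIdeal (f : S4) : Ideal S4 := Ideal.span (Set.range fun i : Fin 4 => pderiv i f)

/-- `m(f)_k = dim_ℂ M(f)_k`, the dimension of the degree-`k` part of the Milnor algebra. -/
def milnor4 (f : S4) (k : ℕ) : ℕ :=
  Module.finrank ℂ ((homogeneousSubmodule (Fin 4) ℂ k).map
    (Submodule.mkQ ((JacIdeal f).restrictScalars ℂ)))

/-- `binom(m,3)` with the convention that it is `0` for `m < 3`. -/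
def binom3 (m : ℤ) : ℕ := m.toNat.choose 3

/-- All four `3×3` minors of the `3×4` matrix with rows `ρ1, ρ2, ρ` vanish. -/
def MinorsVanish3 (ρ1 ρ2 ρ : Fin 4 → S4) : Prop :=
  ∀ j : Fin 4,
    (Matrix.of fun i k => ![ρ1, ρ2, ρ] i (j.succAbove k) : Matrix (Fin 3) (Fin 3) S4).det = 0

/-- `D : f = 0` is tame with respect to `ρ1, ρ2`: every homogeneous syzygy `ρ` for which all
`3×3` minors of the matrix with rows `ρ1, ρ2, ρ` vanish lies in `S·ρ1 + S·ρ2`. -/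
def TamePair (f : S4) (ρ1 ρ2 : Fin 4 → S4) : Prop :=
  ∀ ρ ∈ AR4 f, ∀ q : ℕ, VecHomog ρ q → MinorsVanish3 ρ1 ρ2 ρ →
    ∃ a b : S4, ρ = a • ρ1 + b • ρ2

/-- `ρ1` is a nonzero homogeneous syzygy of minimal degree `e1`, and `ρ2` is a homogeneous
syzygy of minimal degree `e2 ≥ e1` among the homogeneous syzygies not in `S·ρ1`. -/
def MinimalPair (f : S4) (ρ1 ρ2 : Fin 4 → S4) (e1 e2 : ℕ) : Prop :=
  ρ1 ∈ AR4 f ∧ ρ1 ≠ 0 ∧ VecHomog ρ1 e1 ∧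
  (∀ ρ ∈ AR4 f, ∀ q : ℕ, ρ ≠ 0 → VecHomog ρ q → e1 ≤ q) ∧
  ρ2 ∈ AR4 f ∧ VecHomog ρ2 e2 ∧ e1 ≤ e2 ∧ (∀ a : S4, ρ2 ≠ a • ρ1) ∧
  (∀ ρ ∈ AR4 f, ∀ q : ℕ, VecHomog ρ q → (∀ a : S4, ρ ≠ a • ρ1) → e2 ≤ q)

/-- `D : f = 0` is a free surface with exponents `d1 ≤ d2 ≤ d3`: `AR(f)` is a free graded
`S`-module with a homogeneous basis of degrees `d1, d2, d3`. -/
def IsFreeWith (f : S4) (d1 d2 d3 : ℕ) : Prop :=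
  d1 ≤ d2 ∧ d2 ≤ d3 ∧
  ∃ ρ1 ρ2 ρ3 : Fin 4 → S4,
    ρ1 ∈ AR4 f ∧ ρ2 ∈ AR4 f ∧ ρ3 ∈ AR4 f ∧
    VecHomog ρ1 d1 ∧ VecHomog ρ2 d2 ∧ VecHomog ρ3 d3 ∧
    (∀ ρ ∈ AR4 f, ∃ a b c : S4, ρ = a • ρ1 + b • ρ2 + c • ρ3) ∧
    (∀ a b c : S4, a • ρ1 + b • ρ2 + c • ρ3 = 0 → a = 0 ∧ b = 0 ∧ c = 0)

/-- `D : f = 0` is a nearly free surface with exponents `d1 ≤ d2 ≤ d3` (`d4 = d3`):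
`AR(f)` is generated by four homogeneous syzygies of degrees `d1, d2, d3, d3`,
with `d3 = d - (d1 + d2)`, whose module of relations is generated by a single relation
`a₁ρ₁ + a₂ρ₂ + a₃ρ₃ + a₄ρ₄ = 0` with `a₁, a₂, a₃, a₄` homogeneous of degrees
`d3-d1+1, d3-d2+1, 1, 1`. -/
def IsNearlyFreeWith (f : S4) (d d1 d2 d3 : ℕ) : Prop :=
  d1 ≤ d2 ∧ d2 ≤ d3 ∧ d1 + d2 + d3 = d ∧
  ∃ (ρ : Fin 4 → Fin 4 → S4) (a : Fin 4 → S4),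
    (∀ i, ρ i ∈ AR4 f) ∧
    VecHomog (ρ 0) d1 ∧ VecHomog (ρ 1) d2 ∧ VecHomog (ρ 2) d3 ∧ VecHomog (ρ 3) d3 ∧
    (∀ σ ∈ AR4 f, ∃ b : Fin 4 → S4, σ = ∑ i, b i • ρ i) ∧
    (a 0).IsHomogeneous (d3 - d1 + 1) ∧ (a 1).IsHomogeneous (d3 - d2 + 1) ∧
    (a 2).IsHomogeneous 1 ∧ (a 3).IsHomogeneous 1 ∧
    a ≠ 0 ∧ (∑ i, a i • ρ i) = 0 ∧
    (∀ b : Fin 4 → S4, (∑ i, b i • ρ i) = 0 → ∃ c : S4, b = c • a)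

/-- `D : f = 0` is tame: it is tame with respect to some pair `ρ1, ρ2` chosen as in the paper. -/
def IsTame (f : S4) : Prop :=
  ∃ (ρ1 ρ2 : Fin 4 → S4) (e1 e2 : ℕ), MinimalPair f ρ1 ρ2 e1 e2 ∧ TamePair f ρ1 ρ2

/-- The `4×4` matrix with rows the Euler vector field `(x,y,z,w)` and `ρ1, ρ2, ρ`. -/
def EMat (ρ1 ρ2 ρ : Fin 4 → S4) : Matrix (Fin 4) (Fin 4) S4 :=
  Matrix.of ![fun i => X i, ρ1, ρ2, ρ]

/-- The leading coefficient `a = s₁² - s₂` of the Hilbert polynomial of a free surface. -/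
def freeHilbA (x y z : ℚ) : ℚ := (x + y + z) ^ 2 - (x * y + x * z + y * z)

/-- The constant coefficient `b = 2a - s₁³ + (3/2)s₁s₂ - (1/2)s₃` of the Hilbert polynomial
of a free surface. -/
def freeHilbB (x y z : ℚ) : ℚ :=
  2 * freeHilbA x y z - (x + y + z) ^ 3 +
    (3 / 2) * (x + y + z) * (x * y + x * z + y * z) - (1 / 2) * (x * y * z)

lemma dep_of_minors {R : Type*} [CommRing R] [IsDomain R] (v : Fin 3 → Fin 4 → R)
    (h : ∀ i, (Matrix.of (Fin.cons (Pi.single i 1) v : Fin 4 → Fin 4 → R)).det = 0) :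
    ¬ LinearIndependent R v := by
  intro hv
  obtain ⟨x, hx⟩ := exists_linearIndependent_cons_of_lt_finrank hv (by simp)
  have h0 : (Matrix.of (Fin.cons x v : Fin 4 → Fin 4 → R)).det = 0 := by
    have key : ∀ i : Fin 4, ((Matrix.of (Fin.cons x v : Fin 4 → Fin 4 → R)).submatrix
        Fin.succ i.succAbove).det = 0 := by
      intro i
      have := h i
      rw [Matrix.det_succ_row_zero, Finset.sum_eq_single i] at this
      · have h2 : IsUnit ((-1 : R) ^ (i : ℕ)) := (isUnit_one.neg).pow _
        simp only [Matrix.of_apply, Fin.cons_zero, Pi.single_eq_same, mul_one] at this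
        rw [h2.mul_right_eq_zero] at this
        rw [← this]
        congr 1
      · intro j _ hj
        simp [hj]
      · simp
    rw [Matrix.det_succ_row_zero]
    exact Finset.sum_eq_zero fun i _ => by rw [key i, mul_zero]
  obtain ⟨w, hw, hw0⟩ := Matrix.exists_vecMul_eq_zero_iff.mpr h0
  apply hw
  rw [Fintype.linearIndependent_iff] at hx
  funext i
  refine hx w ?_ i
  rw [← hw0]
  funext j
  simp [Matrix.vecMul, dotProduct]

lemma det_homog (M : Matrix (Fin 4) (Fin 4) S4) (e : Fin 4 → ℕ)
    (h : ∀ i j, (M i j).IsHomogeneous (e i)) : M.det.IsHomogeneous (∑ i, e i) := by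
  rw [← Matrix.det_transpose, Matrix.det_apply]
  refine IsHomogeneous.sum _ _ _ fun σ _ => ?_
  have := IsHomogeneous.prod Finset.univ (fun i => Mᵀ (σ i) i) e (fun i _ => h i (σ i))
  rcases Int.units_eq_one_or (Equiv.Perm.sign σ) with h | h <;> rw [h]
  · simpa using this
  · simpa using this.neg

lemma pderiv_degree {p : S4} (i : Fin 4) (h : pderiv i p ≠ 0) :
    (pderiv i p).totalDegree < p.totalDegree := by
  obtain ⟨m, hm⟩ : ((pderiv i p).support).Nonempty := by
    rwa [Finset.nonempty_iff_ne_empty, Ne, MvPolynomial.support_eq_empty]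
  have key : ∀ m ∈ (pderiv i p).support, (m.sum fun _ e => e) + 1 ≤ p.totalDegree := by
    intro m hm
    have hm2 : m + Finsupp.single i 1 ∈ p.support := by
      rw [MvPolynomial.mem_support_iff] at hm ⊢
      rw [coeff_pderiv] at hm
      exact left_ne_zero_of_mul hm
    have := le_totalDegree hm2
    rw [Finsupp.sum_add_index' (by simp) (by simp)] at this
    simpa using this
  have h1 := key m hm
  have : (pderiv i p).totalDegree ≤ p.totalDegree - 1 := by
    refine Finset.sup_le fun m hm => ?_
    have := key m hm
    omega
  omega

lemma eq_C_of_pderiv {p : S4} (h : ∀ i, pderiv i p = 0) : p = C (coeff 0 p) := by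
  ext m
  rw [coeff_C]
  split_ifs with h0
  · rw [← h0]
  · have : ∃ i, m i ≠ 0 := by
      by_contra hc
      push Not at hc
      exact h0 (by ext i; simp [hc i])
    obtain ⟨i, hi⟩ := this
    have h1 := coeff_pderiv (i := i) p (m - Finsupp.single i 1)
    rw [h i, coeff_zero] at h1
    have h2 : m - Finsupp.single i 1 + Finsupp.single i 1 = m :=
      tsub_add_cancel_of_le (by simpa [Nat.one_le_iff_ne_zero] using hi)
    rw [h2] at h1
    have h3 : (((m - Finsupp.single i 1 : Fin 4 →₀ ℕ) i : ℕ) : ℂ) + 1 ≠ 0 :=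
      Nat.cast_add_one_ne_zero _
    exact (mul_eq_zero.mp h1.symm).resolve_right h3

lemma irred_not_dvd {p : S4} (hp : Irreducible p) : ∃ i, ¬ p ∣ pderiv i p := by
  by_contra hc
  push Not at hc
  have h0 : ∀ i, pderiv i p = 0 := by
    intro i
    by_contra hne
    have h1 := pderiv_degree i hne
    obtain ⟨q, hq⟩ := hc i
    have hq0 : q ≠ 0 := by rintro rfl; simp [hq] at hne
    rw [hq, totalDegree_mul_of_isDomain hp.ne_zero hq0] at h1
    omega
  have h1 := eq_C_of_pderiv h0
  apply hp.not_isUnit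
  rw [h1]
  refine IsUnit.map C (isUnit_iff_ne_zero.mpr ?_)
  intro h2
  rw [h2, C_0] at h1
  exact hp.ne_zero h1

lemma grad_primitive {f : S4} {d : ℕ} (hd : 1 ≤ d) (hf : f.IsHomogeneous d)
    (hred : Squarefree f) {p : S4} (hp : Irreducible p) : ∃ i, ¬ p ∣ pderiv i f := by
  by_contra hc
  push Not at hc
  have hE := hf.sum_X_mul_pderiv
  have hpf : p ∣ f := by
    have h1 : p ∣ d • f := by
      rw [← hE]
      exact Finset.dvd_sum fun i _ => (hc i).mul_left _
    rw [nsmul_eq_mul] at h1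
    have h2 : IsUnit (d : S4) := by
      have : (d : S4) = C (d : ℂ) := by simp
      rw [this]
      exact IsUnit.map C (isUnit_iff_ne_zero.mpr (by exact_mod_cast (by omega : d ≠ 0)))
    exact (h2.dvd_mul_left).mp h1
  obtain ⟨g, rfl⟩ := hpf
  obtain ⟨i, hi⟩ := irred_not_dvd hp
  have h3 := hc i
  rw [pderiv_mul] at h3
  have h4 : p ∣ pderiv i p * g := (dvd_add_left (dvd_mul_right _ _)).mp h3
  rcases hp.prime.dvd_or_dvd h4 with h | h
  · exact hi h
  · exact hp.not_isUnit (hred p (mul_dvd_mul_left p h))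

lemma dvd_of_primitive (v : Fin 4 → S4) (hv : ∀ p : S4, Irreducible p → ∃ i, ¬ p ∣ v i)
    (a : S4) (ha : a ≠ 0) : ∀ m : S4, (∀ i, a ∣ m * v i) → a ∣ m := by
  induction a using UniqueFactorizationMonoid.induction_on_prime with
  | h₁ => exact absurd rfl ha
  | h₂ x hx => intro m _; exact hx.dvd
  | h₃ a p ha0 hp ih =>
    intro m hm
    obtain ⟨i, hi⟩ := hv p hp.irreducible
    have h1 : p ∣ m := (hp.dvd_or_dvd ((dvd_mul_right p a).trans (hm i))).resolve_right hi
    obtain ⟨m', rfl⟩ := h1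
    refine mul_dvd_mul_left p (ih ha0 m' fun j => ?_)
    have := hm j
    rw [mul_assoc] at this
    exact (mul_dvd_mul_iff_left hp.ne_zero).mp this

/-- Signed maximal minors. -/
def minr {R : Type*} [CommRing R] (ρ : Fin 3 → Fin 4 → R) (i : Fin 4) : R :=
  (Matrix.of (Fin.cons (Pi.single i 1) ρ : Fin 4 → Fin 4 → R)).det

lemma minr_parallel {R : Type*} [CommRing R] (ρ : Fin 3 → Fin 4 → R) (g : Fin 4 → R)
    (h : ∀ i, ∑ j, ρ i j * g j = 0) (i j : Fin 4) : minr ρ j * g i = minr ρ i * g j := by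
  set N := Matrix.of (Fin.cons (Pi.single j 1) ρ : Fin 4 → Fin 4 → R) with hN
  have h1 : N *ᵥ g = Pi.single 0 (g j) := by
    funext k
    refine Fin.cases ?_ (fun k => ?_) k
    · simp [N, Matrix.mulVec, dotProduct, Pi.single_apply]
    · simpa [N, Matrix.mulVec, dotProduct] using h k
  have h2 : N.adjugate *ᵥ (N *ᵥ g) = N.det • g := by
    rw [Matrix.mulVec_mulVec, Matrix.adjugate_mul, Matrix.smul_mulVec, Matrix.one_mulVec]
  rw [h1] at h2
  have h3 := congrFun h2 i
  simp only [Matrix.mulVec_single, Pi.smul_apply, smul_eq_mul] at h3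
  have h4 : N.adjugate i 0 = minr ρ i := by
    rw [Matrix.adjugate_apply, minr]
    congr 1
    ext a b
    refine Fin.cases ?_ (fun k => ?_) a
    · simp
    · simp [N]
  rw [← h4]
  simp only [minr, ← hN, ← h3]
  simp [mul_comm]

lemma degree_sum (f : S4) (d : ℕ) (hd : 1 ≤ d) (hf : f.IsHomogeneous d) (hred : Squarefree f)
    (ρ : Fin 3 → Fin 4 → S4) (e : Fin 3 → ℕ) (hρ : ∀ i, ρ i ∈ AR4 f)
    (hh : ∀ i, VecHomog (ρ i) (e i))
    (hspan : ∀ σ ∈ AR4 f, ∃ a : Fin 3 → S4, σ = ∑ i, a i • ρ i)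
    (hli : LinearIndependent S4 ρ) : e 0 + e 1 + e 2 + 1 = d := by
  have hpar := minr_parallel ρ (fun i => pderiv i f) hρ
  have hprim := fun p hp => grad_primitive hd hf hred (p := p) hp
  obtain ⟨j, hj⟩ : ∃ j, pderiv j f ≠ 0 := by
    obtain ⟨i, hi⟩ := hprim (X 0) MvPolynomial.X_prime.irreducible
    exact ⟨i, fun h => hi (h ▸ dvd_zero _)⟩
  obtain ⟨h, hh1⟩ : pderiv j f ∣ minr ρ j :=
    dvd_of_primitive _ hprim _ hj _ fun i => by rw [hpar i j]; exact dvd_mul_left _ _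
  have hm : ∀ i, minr ρ i = h * pderiv i f := by
    intro i
    have := hpar i j
    rw [hh1] at this
    refine mul_right_cancel₀ hj ?_
    rw [← this]; ring
  have hh0 : h ≠ 0 := by
    rintro rfl
    exact dep_of_minors ρ (fun i => by have := hm i; rwa [zero_mul] at this) hli
  have hu : IsUnit h := by
    by_contra hnu
    obtain ⟨p, hp, hph⟩ := WfDvdMonoid.exists_irreducible_factor hnu hh0
    have : (Ideal.span {p}).IsPrime :=
      (Ideal.span_singleton_prime hp.ne_zero).mpr hp.prime
    let π := Ideal.Quotient.mk (Ideal.span {p})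
    have hdep := dep_of_minors (fun i j => π (ρ i j)) (fun i => by
      have h1 : π (minr ρ i) = 0 := by
        rw [Ideal.Quotient.eq_zero_iff_mem, Ideal.mem_span_singleton, hm i]
        exact hph.mul_right _
      rw [minr, RingHom.map_det] at h1
      rw [← h1]
      congr 1
      ext a b
      refine Fin.cases ?_ (fun k => ?_) a
      · simp only [Matrix.of_apply, Fin.cons_zero, RingHom.mapMatrix_apply, Matrix.map_apply,
          Pi.single_apply]
        split_ifs <;> simp
      · simp)
    apply hdep
    rw [Fintype.linearIndependent_iff]
    intro c hc
    choose a ha using fun i => Ideal.Quotient.mk_surjective (I := Ideal.span {p}) (c i)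
    have h1 : ∀ k, p ∣ ∑ i, a i * ρ i k := by
      intro k
      rw [← Ideal.mem_span_singleton, ← Ideal.Quotient.eq_zero_iff_mem, map_sum]
      have := congrFun hc k
      simp only [Finset.sum_apply, Pi.smul_apply, smul_eq_mul, Pi.zero_apply] at this
      simpa [ha] using this
    choose σ hσ using h1
    have hσ' : p • σ = ∑ i, a i • ρ i := by
      funext k
      simp [← hσ k, Finset.sum_apply]
    have hσA : σ ∈ AR4 f := by
      have h2 : p • σ ∈ AR4 f := by
        rw [hσ']
        exact Submodule.sum_mem _ fun i _ => Submodule.smul_mem _ _ (hρ i)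
      rw [AR4, LinearMap.mem_ker, map_smul, smul_eq_mul] at h2
      exact (mul_eq_zero.mp h2).resolve_left hp.ne_zero
    obtain ⟨b, hb⟩ := hspan σ hσA
    have h3 : ∑ i, (a i - p * b i) • ρ i = 0 := by
      simp only [sub_smul, Finset.sum_sub_distrib, ← hσ', mul_smul, ← Finset.smul_sum, ← hb,
        sub_self]
    intro i
    have h4 := Fintype.linearIndependent_iff.mp hli _ h3 i
    rw [← ha i, Ideal.Quotient.eq_zero_iff_mem, Ideal.mem_span_singleton]
    exact ⟨b i, sub_eq_zero.mp h4⟩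
  obtain ⟨c, hc, rfl⟩ := isUnit_iff_eq_C_of_isReduced.mp hu
  have h1 : (minr ρ j).IsHomogeneous (∑ i, (Fin.cons 0 e : Fin 4 → ℕ) i) := by
    refine det_homog _ _ fun a b => ?_
    refine Fin.cases ?_ (fun k => ?_) a
    · simp only [Matrix.of_apply, Fin.cons_zero, Pi.single_apply]
      split_ifs
      · exact isHomogeneous_one _ _
      · exact isHomogeneous_zero _ _ _
    · simpa using hh k b
  have h2 : (minr ρ j).IsHomogeneous (d - 1) := by
    rw [hm j]
    exact (hf.pderiv (i := j)).C_mul c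
  have h3 := h1.inj_right h2 (by rw [hm j]; exact mul_ne_zero hh0 hj)
  simp [Fin.sum_univ_succ] at h3
  omega
lemma hc_mul {a g : S4} {e : ℕ} (q : ℕ) (hg : g.IsHomogeneous e) :
    homogeneousComponent (q + e) (a * g) = homogeneousComponent q a * g := by
  let _ : GradedAlgebra (homogeneousSubmodule (Fin 4) ℂ) := MvPolynomial.gradedAlgebra
  have := DirectSum.coe_decompose_mul_add_of_right_mem (homogeneousSubmodule (Fin 4) ℂ)
    (i := q) (j := e) (a := a) (b := g) hg
  have h1 : ∀ (φ : S4) (i : ℕ), (DirectSum.decompose (homogeneousSubmodule (Fin 4) ℂ) φ i : S4) =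
    homogeneousComponent i φ := fun φ i => decomposition.decompose'_apply φ i
  rwa [h1, h1] at this

lemma finrank_homog (k : ℕ) :
    Module.finrank ℂ (homogeneousSubmodule (Fin 4) ℂ k) = (k + 3).choose 3 := by
  have hs : {d : Fin 4 →₀ ℕ | d.degree = k} =
      ((Finset.univ : Finset (Fin 4)).finsuppAntidiag k : Set (Fin 4 →₀ ℕ)) := by
    ext d
    simp [Finset.mem_finsuppAntidiag, Finsupp.degree_eq_sum]
  rw [homogeneousSubmodule_eq_finsupp_supported, hs]
  have e := AddMonoidAlgebra.supportedEquivFinsupp (R := ℂ) (S := ℂ)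
    ((Finset.univ : Finset (Fin 4)).finsuppAntidiag k : Set (Fin 4 →₀ ℕ))
  rw [LinearEquiv.finrank_eq e, Module.finrank_finsupp_self]
  simp only [Finset.coe_sort_coe, Fintype.card_coe]
  rw [Finset.card_finsuppAntidiag_nat_eq_choose]
  simp only [Finset.card_univ, Fintype.card_fin]
  rw [show 4 + k - 1 = k + 3 by omega, ← Nat.choose_symm_of_eq_add (n := k + 3) (a := k) (b := 3) rfl]

instance (k : ℕ) : Module.Finite ℂ (homogeneousSubmodule (Fin 4) ℂ k) :=
  Module.Finite.iff_fg.mpr (homogeneousSubmodule_fg _ _ k)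

lemma IsHomogeneous_mul' {a b : S4} {m n k : ℕ} (ha : a.IsHomogeneous m) (hb : b.IsHomogeneous n)
    (h : m + n = k) : (a * b).IsHomogeneous k := h ▸ ha.mul hb

/-- General multiplication map `a ↦ Σ a_i g_i` on graded pieces. -/
def grMap {n : ℕ} (g : Fin n → S4) (e : Fin n → ℕ) (hg : ∀ i, (g i).IsHomogeneous (e i))
    (m : Fin n → ℕ) (k : ℕ) (hk : ∀ i, m i + e i = k) :
    (∀ i, homogeneousSubmodule (Fin 4) ℂ (m i)) →ₗ[ℂ] homogeneousSubmodule (Fin 4) ℂ k where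
  toFun a := ⟨∑ i, (a i : S4) * g i, Submodule.sum_mem _ fun i _ =>
    IsHomogeneous_mul' (a i).2 (hg i) (hk i)⟩
  map_add' a b := by ext1; simp [add_mul, Finset.sum_add_distrib]
  map_smul' c a := by ext1; simp [Finset.smul_sum]

lemma milnor_eq (f : S4) (s : ℕ) (hf : ∀ i, (pderiv i f).IsHomogeneous s)
    (ρ : Fin 3 → Fin 4 → S4) (e : Fin 3 → ℕ) (hρ : ∀ i, ρ i ∈ AR4 f)
    (hh : ∀ i, VecHomog (ρ i) (e i))
    (hspan : ∀ σ ∈ AR4 f, ∃ a : Fin 3 → S4, σ = ∑ i, a i • ρ i)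
    (hli : LinearIndependent S4 ρ) (q : ℕ) (n : Fin 3 → ℕ) (hn : ∀ i, n i + e i = q) :
    milnor4 f (q + s) + 4 * (q + 3).choose 3 =
      (q + s + 3).choose 3 + ∑ i, (n i + 3).choose 3 := by
  let φ := grMap (fun i => pderiv i f) (fun _ => s) hf (fun _ => q) (q + s) (fun _ => rfl)
  let Ψ : (∀ i, homogeneousSubmodule (Fin 4) ℂ (n i)) →ₗ[ℂ]
      (Fin 4 → homogeneousSubmodule (Fin 4) ℂ q) :=
    LinearMap.pi fun k => grMap (fun i => ρ i k) e (fun i => hh i k) n q hn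
  let π : homogeneousSubmodule (Fin 4) ℂ (q + s) →ₗ[ℂ] _ :=
    (Submodule.mkQ ((JacIdeal f).restrictScalars ℂ)).comp (Submodule.subtype _)
  have hφ : ∀ a, (φ a : S4) = ∑ i, (a i : S4) * pderiv i f := fun a => rfl
  have hΨ : ∀ b k, (Ψ b k : S4) = ∑ i, (b i : S4) * ρ i k := fun a k => rfl
  have h1 : milnor4 f (q + s) = Module.finrank ℂ (LinearMap.range π) := by
    rw [milnor4, LinearMap.range_comp, Submodule.range_subtype]
  have h2 : LinearMap.ker π = LinearMap.range φ := by
    ext x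
    rw [LinearMap.mem_ker, LinearMap.mem_range]
    simp only [π, LinearMap.comp_apply, Submodule.mkQ_apply, Submodule.subtype_apply,
      Submodule.Quotient.mk_eq_zero, Submodule.restrictScalars_mem]
    constructor
    · intro hx
      obtain ⟨c, hc⟩ := (Submodule.mem_span_range_iff_exists_fun S4).mp hx
      refine ⟨fun i => ⟨homogeneousComponent q (c i), homogeneousComponent_isHomogeneous _ _⟩, ?_⟩
      ext1
      rw [hφ]
      have h3 := congrArg (homogeneousComponent (q + s)) hc
      rw [homogeneousComponent_eq_self x.2, map_sum] at h3
      rw [← h3]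
      refine Finset.sum_congr rfl fun i _ => ?_
      rw [smul_eq_mul, hc_mul q (hf i)]
    · rintro ⟨a, rfl⟩
      rw [hφ]
      exact Ideal.sum_mem _ fun i _ => Ideal.mul_mem_left _ _ (Ideal.subset_span ⟨i, rfl⟩)
  have h3 : LinearMap.ker φ = LinearMap.range Ψ := by
    ext x
    rw [LinearMap.mem_ker, LinearMap.mem_range]
    constructor
    · intro hx
      have hx' : (fun i => (x i : S4)) ∈ AR4 f := by
        have := congrArg Subtype.val hx
        rw [hφ] at this
        exact this
      obtain ⟨a, ha⟩ := hspan _ hx'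
      refine ⟨fun i => ⟨homogeneousComponent (n i) (a i), homogeneousComponent_isHomogeneous _ _⟩,
        ?_⟩
      funext k
      ext1
      rw [hΨ]
      have h4 := congrArg (homogeneousComponent q) (congrFun ha k)
      rw [homogeneousComponent_eq_self (x k).2, Finset.sum_apply, map_sum] at h4
      rw [h4]
      refine Finset.sum_congr rfl fun i _ => ?_
      rw [Pi.smul_apply, smul_eq_mul, ← hc_mul (n i) (hh i k), hn i]
    · rintro ⟨b, rfl⟩
      ext1
      have h4 : (∑ i, (b i : S4) • ρ i) ∈ AR4 f :=
        Submodule.sum_mem _ fun i _ => Submodule.smul_mem _ _ (hρ i)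
      have h5 : (fun k => (Ψ b k : S4)) = ∑ i, (b i : S4) • ρ i := by
        funext k
        simp [hΨ, Finset.sum_apply]
      rw [← h5] at h4
      exact h4
  have h4 : Function.Injective Ψ := by
    rw [injective_iff_map_eq_zero]
    intro b hb
    have h5 : ∑ i, (b i : S4) • ρ i = 0 := by
      funext k
      have := congrArg Subtype.val (congrFun hb k)
      rw [hΨ] at this
      simpa [Finset.sum_apply] using this
    funext i
    exact Subtype.ext (Fintype.linearIndependent_iff.mp hli _ h5 i)
  have r1 := LinearMap.finrank_range_add_finrank_ker π
  have r2 := LinearMap.finrank_range_add_finrank_ker φ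
  have r3 := LinearMap.finrank_range_of_inj h4
  rw [h2, finrank_homog, ← h1] at r1
  rw [h3, r3, Module.finrank_pi_fintype, Module.finrank_pi_fintype] at r2
  simp only [finrank_homog, Finset.sum_const, Finset.card_univ, Fintype.card_fin,
    smul_eq_mul] at r2
  omega

lemma choose3 (n : ℕ) : ((n + 3).choose 3 : ℚ) = (n + 1) * (n + 2) * (n + 3) / 6 := by
  induction n with
  | zero => norm_num
  | succ n ih =>
    have h2 : ∀ m : ℕ, ((m + 2).choose 2 : ℚ) = (m + 1) * (m + 2) / 2 := by
      intro m
      rw [Nat.cast_choose_two]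
      push_cast
      ring
    rw [show n + 1 + 3 = (n + 3) + 1 by ring, Nat.choose_succ_succ' (n + 3) 2]
    push_cast
    rw [ih, show n + 3 = (n + 1) + 2 by ring, h2]
    push_cast
    ring
/-- **Formula (2.2).** For a free surface with exponents `d1 ≤ d2 ≤ d3` which is not a cone,
one has `d1 + d2 + d3 = d - 1` and the Hilbert polynomial of the Milnor algebra is
`a·k + b` with `a = s₁² - s₂` and `b = 2a - s₁³ + (3/2)s₁s₂ - (1/2)s₃`. -/
theorem free_hilbert_polynomial (f : S4) (d d1 d2 d3 : ℕ)
    (hd : 1 ≤ d) (hf : f.IsHomogeneous d) (hred : Squarefree f)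
    (hfree : IsFreeWith f d1 d2 d3)
    (hnocone : ∀ ρ ∈ AR4 f, VecHomog ρ 0 → ρ = 0) :
    d1 + d2 + d3 + 1 = d ∧
    ∃ N : ℕ, ∀ k : ℕ, N ≤ k →
      (milnor4 f k : ℚ) =
        freeHilbA d1 d2 d3 * k + freeHilbB d1 d2 d3 := by
  obtain ⟨h12, h23, ρ1, ρ2, ρ3, hr1, hr2, hr3, hh1, hh2, hh3, hsp, hind⟩ := hfree
  have hρ : ∀ i, (![ρ1, ρ2, ρ3] : Fin 3 → Fin 4 → S4) i ∈ AR4 f := by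
    intro i; fin_cases i <;> assumption
  have hh : ∀ i, VecHomog ((![ρ1, ρ2, ρ3] : Fin 3 → Fin 4 → S4) i)
      ((![d1, d2, d3] : Fin 3 → ℕ) i) := by
    intro i; fin_cases i <;> assumption
  have hspan : ∀ σ ∈ AR4 f, ∃ a : Fin 3 → S4,
      σ = ∑ i, a i • (![ρ1, ρ2, ρ3] : Fin 3 → Fin 4 → S4) i := by
    intro σ hσ
    obtain ⟨a, b, c, h⟩ := hsp σ hσ
    exact ⟨![a, b, c], by rw [h, Fin.sum_univ_three]; rfl⟩
  have hli : LinearIndependent S4 (![ρ1, ρ2, ρ3] : Fin 3 → Fin 4 → S4) := by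
    rw [Fintype.linearIndependent_iff]
    intro g hg
    rw [Fin.sum_univ_three] at hg
    obtain ⟨a, b, c⟩ := hind _ _ _ hg
    intro i; fin_cases i <;> assumption
  have hdeg : d1 + d2 + d3 + 1 = d := degree_sum f d hd hf hred _ _ hρ hh hspan hli
  refine ⟨hdeg, d1 + d2 + d3 + d3, fun k hk => ?_⟩
  obtain ⟨q, rfl⟩ : ∃ q, k = q + (d1 + d2 + d3) := ⟨k - (d1 + d2 + d3), by omega⟩
  obtain ⟨n1, hn1⟩ : ∃ n, n + d1 = q := ⟨q - d1, by omega⟩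
  obtain ⟨n2, hn2⟩ : ∃ n, n + d2 = q := ⟨q - d2, by omega⟩
  obtain ⟨n3, hn3⟩ : ∃ n, n + d3 = q := ⟨q - d3, by omega⟩
  have hm := milnor_eq f (d1 + d2 + d3)
    (fun i => by
      have := hf.pderiv (i := i)
      rwa [← hdeg, Nat.add_sub_cancel] at this)
    _ _ hρ hh hspan hli q ![n1, n2, n3]
    (by intro i; fin_cases i <;> assumption)
  rw [Fin.sum_univ_three] at hm
  have hm2 : (milnor4 f (q + (d1 + d2 + d3)) : ℚ) + 4 * ((q + 3).choose 3 : ℕ) =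
      ((q + (d1 + d2 + d3) + 3).choose 3 : ℕ) + (((n1 + 3).choose 3 : ℕ) +
        ((n2 + 3).choose 3 : ℕ) + ((n3 + 3).choose 3 : ℕ)) := by
    exact_mod_cast hm
  simp only [choose3] at hm2
  have e1 : (n1 : ℚ) = q - d1 := by rw [← hn1]; push_cast; ring
  have e2 : (n2 : ℚ) = q - d2 := by rw [← hn2]; push_cast; ring
  have e3 : (n3 : ℚ) = q - d3 := by rw [← hn3]; push_cast; ring
  rw [e1, e2, e3] at hm2
  unfold freeHilbB freeHilbA
  push_cast at hm2 ⊢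
  linear_combination hm2
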